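/- Let m ∈ ℕ with m ≥ 1, let p₁,…,p_m be minimal idempotent ultrafilters on ℕ, let A ∈ ⊗_{i=1}^m p_i, and let T ∈ 𝒫_f(ℙ). Then there exist functions α₁,…,α_m : 𝒫_f(ℕ^ℕ) → ℕ and H₁,…,H_m : 𝒫_f(ℕ^ℕ) → 𝒫_f(ℕ) such that (1) whenever G, K ∈ 𝒫_f(ℕ^ℕ) and G ⊊ K one has max H_j(G) < min H_j(K) for every j ∈ {1,…,m}, and (2) whenever G₁ ⊊ G₂ ⊊ ⋯ ⊊ G_n ⊊ ⋯ is an infinite strictly increasing chain in 𝒫_f(ℕ^ℕ), f_i ∈ G_i for each i ∈ ℕ, β₁ < β₂ < ⋯ < β_m are in 𝒫_f(ℕ), and P₁,…,P_m ∈ T, the tuple (Σ_{i∈β₁}α₁(G_i) + P₁(Σ_{i∈β₁}Σ_{t∈H₁(G_i)}f_i(t)), …, Σ_{i∈β_m}α_m(G_i) + P_m(Σ_{i∈β_m}Σ_{t∈H_m(G_i)}f_i(t))) belongs to A. -/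

import Mathlib

namespace MultiCST

/-- The sum `p + q` of ultrafilters on ℕ: `A ∈ p + q` iff `{x : {y : x+y ∈ A} ∈ q} ∈ p`. -/
def uAdd (p q : Ultrafilter ℕ) : Ultrafilter ℕ :=
  p.bind fun x => q.map fun y => x + y

/-- `A ⊆ ℕ` is a J-set. -/
def IsJSet (A : Set ℕ) : Prop :=
  ∀ F : Finset (ℕ → ℕ), F.Nonempty →
    ∃ (a : ℕ) (β : Finset ℕ), β.Nonempty ∧ ∀ f ∈ F, a + ∑ t ∈ β, f t ∈ A

/-- `p ∈ 𝒥`: every member of `p` is a J-set. -/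
def MemJ (p : Ultrafilter ℕ) : Prop := ∀ A : Set ℕ, A ∈ p → IsJSet A

/-- `p` is an idempotent ultrafilter. -/
def IdempotentUF (p : Ultrafilter ℕ) : Prop := uAdd p p = p

/-- `p` is a minimal idempotent ultrafilter. -/
def IsMinimalIdempotent (p : Ultrafilter ℕ) : Prop :=
  IdempotentUF p ∧
    ∀ q : Ultrafilter ℕ, IdempotentUF q → uAdd q p = q → uAdd p q = q → q = p

/-- Tensor product `⊗_{i=1}^m p_i` of ultrafilters on ℕ, as an ultrafilter on `Fin m → ℕ`. -/
def tensor : ∀ m : ℕ, (Fin m → Ultrafilter ℕ) → Ultrafilter (Fin m → ℕ)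
  | 0, _ => pure fun i => i.elim0
  | m + 1, p =>
      (p 0).bind fun x => (tensor m fun i => p i.succ).map fun v => Fin.cons x v

/-- `f : ℕ → ℕ` is (given by) a polynomial with coefficients in ℕ and zero constant term. -/
def IsPolyZeroConst (f : ℕ → ℕ) : Prop :=
  ∃ P : Polynomial ℕ, P.coeff 0 = 0 ∧ ∀ x, f x = P.eval x

/-- The linear combination `a₁·p₁ + a₂·p₂ + ⋯ + a_m·p_m` of ultrafilters on ℕ. -/
def linComb : ∀ m : ℕ, (Fin m → ℕ) → (Fin m → Ultrafilter ℕ) → Ultrafilter ℕ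
  | 0, _, _ => pure 0
  | m + 1, a, p =>
      uAdd ((p 0).map fun x => a 0 * x)
        (linComb m (fun i => a i.succ) fun i => p i.succ)


/-- Polynomial maps `M → ℤ` vanishing at `0`, of degree at most `d`. -/
def Rdeg {M : Type} [AddCommMonoid M] : ℕ → (M → ℤ) → Prop
  | 0, φ => φ = 0
  | d + 1, φ => φ 0 = 0 ∧ ∀ h, Rdeg d (fun x => φ (x + h) - φ h - φ x)

section
variable {M : Type} [AddCommMonoid M]

lemma Rdeg.zero (d : ℕ) : Rdeg d (0 : M → ℤ) := by
  induction d with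
  | zero => rfl
  | succ d ih =>
    refine ⟨rfl, fun h => ?_⟩
    convert ih using 1
    funext x; simp

lemma Rdeg.add {d : ℕ} {φ ψ : M → ℤ} (h1 : Rdeg d φ) (h2 : Rdeg d ψ) : Rdeg d (φ + ψ) := by
  induction d generalizing φ ψ with
  | zero =>
    have e1 : φ = 0 := h1
    have e2 : ψ = 0 := h2
    show φ + ψ = 0
    simp [e1, e2]
  | succ d ih =>
    refine ⟨by simp [h1.1, h2.1], fun h => ?_⟩
    convert ih (h1.2 h) (h2.2 h) using 1
    funext x; simp; ring

lemma Rdeg.smul {d : ℕ} {φ : M → ℤ} (k : ℤ) (h1 : Rdeg d φ) : Rdeg d (fun x => k * φ x) := by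
  induction d generalizing φ with
  | zero =>
    have e1 : φ = 0 := h1
    show _ = _
    funext x; simp [e1]
  | succ d ih =>
    refine ⟨by simp [h1.1], fun h => ?_⟩
    convert ih (h1.2 h) using 1
    funext x; simp; ring

lemma Rdeg.sub {d : ℕ} {φ ψ : M → ℤ} (h1 : Rdeg d φ) (h2 : Rdeg d ψ) : Rdeg d (φ - ψ) := by
  convert h1.add (h2.smul (-1)) using 1
  funext x; simp; ring

lemma Rdeg.succ {d : ℕ} {φ : M → ℤ} (h1 : Rdeg d φ) : Rdeg (d + 1) φ := by
  induction d generalizing φ with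
  | zero =>
    have e1 : φ = 0 := h1
    subst e1
    exact Rdeg.zero _
  | succ d ih => exact ⟨h1.1, fun h => ih (h1.2 h)⟩

lemma Rdeg.mono {d e : ℕ} (hde : d ≤ e) {φ : M → ℤ} (h1 : Rdeg d φ) : Rdeg e φ := by
  induction hde with
  | refl => exact h1
  | step _ ih => exact ih.succ

lemma Rdeg.linear {u : M → ℤ} (h0 : u 0 = 0) (hu : ∀ x y, u (x + y) = u x + u y) : Rdeg 1 u := by
  refine ⟨h0, fun h => ?_⟩
  show _ = _
  funext x; simp [hu]

lemma Rdeg.mul {u : M → ℤ} (h0 : u 0 = 0) (hu : ∀ x y, u (x + y) = u x + u y)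
    {d : ℕ} {φ : M → ℤ} (h1 : Rdeg d φ) : Rdeg (d + 1) (fun x => u x * φ x) := by
  induction d generalizing φ with
  | zero =>
    have e1 : φ = 0 := h1
    subst e1
    convert Rdeg.zero (M := M) 1 using 1
    funext x; simp
  | succ d ih =>
    refine ⟨by simp [h0], fun h => ?_⟩
    have hlin : Rdeg (d + 1) u := (Rdeg.linear h0 hu).mono (by omega)
    convert ((ih (h1.2 h)).add (hlin.smul (φ h))).add
      (((h1.2 h).succ.smul (u h)).add (h1.smul (u h))) using 1
    funext x; simp [hu]; ring

lemma Rdeg.poly {u : M → ℤ} (h0 : u 0 = 0) (hu : ∀ x y, u (x + y) = u x + u y)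
    (Q : Polynomial ℤ) : ∃ d, Rdeg d (fun x => u x * Q.eval (u x)) := by
  induction Q using Polynomial.induction_on' with
  | add p q hp hq =>
    obtain ⟨d, hd⟩ := hp
    obtain ⟨e, he⟩ := hq
    refine ⟨max d e, ?_⟩
    convert (hd.mono (le_max_left d e)).add (he.mono (le_max_right d e)) using 1
    funext x; simp; ring
  | monomial n a =>
    induction n with
    | zero =>
      refine ⟨1, ?_⟩
      convert (Rdeg.linear h0 hu).smul a using 1
      funext x; simp; ring
    | succ n ih =>
      obtain ⟨d, hd⟩ := ih
      refine ⟨d + 1, ?_⟩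
      convert Rdeg.mul h0 hu hd using 1
      funext x; simp only [Polynomial.eval_monomial]; ring

lemma Rdeg.translate {d : ℕ} {φ ℓ : M → ℤ} (h : M) (hl : Rdeg (d + 1) ℓ) (h1 : Rdeg d (φ - ℓ)) :
    Rdeg d ((fun x => φ (x + h) - φ h) - ℓ) := by
  have hφ : Rdeg (d + 1) φ := by
    have := h1.succ.add hl
    simpa using this
  convert (hφ.2 h).add h1 using 1
  funext x; simp

/-- Colour focusing. -/
lemma focus (x : ℕ → M) (A : Finset (M → ℤ)) (ψ : M → ℤ)
    (hyp : ∀ (Hs : Finset M) (κ : Type) [Finite κ] (L : ℕ),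
      ∃ (I : Finset ℤ) (B : Finset (Finset ℕ)),
        (∀ β ∈ B, β.Nonempty ∧ ∀ t ∈ β, L ≤ t) ∧
        ∀ c : ℤ → κ, ∃ a ∈ I, ∃ β ∈ B, ∀ φ ∈ A, ∀ h ∈ Hs,
          c (a + (φ ((∑ t ∈ β, x t) + h) - φ h - ψ (∑ t ∈ β, x t))) = c a)
    (hA0 : ∀ φ ∈ A, φ 0 = 0)
    (κ : Type) [Finite κ] (L : ℕ) :
    ∃ (I : Finset ℤ) (B : Finset (Finset ℕ)),
      (∀ β ∈ B, β.Nonempty ∧ ∀ t ∈ β, L ≤ t) ∧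
      ∀ c : ℤ → κ, ∃ a ∈ I, ∃ β ∈ B, ∀ φ ∈ A, c (a + φ (∑ t ∈ β, x t)) = c a := by
  classical
  have key : ∀ r : ℕ, ∃ (I : Finset ℤ) (B : Finset (Finset ℕ)),
      (∀ β ∈ B, β.Nonempty ∧ ∀ t ∈ β, L ≤ t) ∧
      ∀ c : ℤ → κ, (∃ a ∈ I, ∃ β ∈ B, ∀ φ ∈ A, c (a + φ (∑ t ∈ β, x t)) = c a) ∨
        ∃ a ∈ I, ∃ Γ : Finset κ, Γ.card = r ∧ ∀ γ ∈ Γ, ∃ β ∈ B, ∀ φ ∈ A,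
          c (a + φ (∑ t ∈ β, x t)) = γ := by
    intro r
    induction r with
    | zero =>
      exact ⟨{0}, ∅, by simp, fun c => Or.inr ⟨0, by simp, ∅, by simp, by simp⟩⟩
    | succ r ih =>
      obtain ⟨I, B, hB, hc⟩ := ih
      let Hs : Finset M := insert 0 (B.image fun β => ∑ t ∈ β, x t)
      let W : Finset ℤ := I ∪ (I ×ˢ (A ×ˢ B)).image fun q => q.1 + q.2.1 (∑ t ∈ q.2.2, x t)
      let L' : ℕ := L + (B.sup fun β => β.sup id) + 1
      have hL' : ∀ β ∈ B, ∀ t ∈ β, t < L' := by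
        intro β hβ t ht
        have h1 : t ≤ β.sup id := Finset.le_sup (f := id) ht
        have h2 : β.sup id ≤ B.sup fun β => β.sup id := Finset.le_sup (f := fun β => β.sup id) hβ
        omega
      obtain ⟨I', B', hB', hc'⟩ := hyp Hs (W → κ) L'
      refine ⟨((I ×ˢ I').image fun q => q.2 + q.1) ∪
          ((I ×ˢ (I' ×ˢ B')).image fun q => q.2.1 + q.1 - ψ (∑ t ∈ q.2.2, x t)),
        B ∪ B' ∪ ((B ×ˢ B').image fun q => q.2 ∪ q.1), ?_, ?_⟩
      · intro β hβ
        simp only [Finset.mem_union, Finset.mem_image, Finset.mem_product] at hβ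
        have hB'' : ∀ β ∈ B', β.Nonempty ∧ ∀ t ∈ β, L ≤ t := by
          intro β hβ
          refine ⟨(hB' β hβ).1, fun t ht => ?_⟩
          have := (hB' β hβ).2 t ht
          omega
        rcases hβ with (hβ | hβ) | ⟨⟨β1, β2⟩, ⟨h1, h2⟩, rfl⟩
        · exact hB β hβ
        · exact hB'' β hβ
        · refine ⟨(hB'' _ h2).1.mono Finset.subset_union_left, fun t ht => ?_⟩
          rcases Finset.mem_union.1 ht with ht | ht
          · exact (hB'' _ h2).2 t ht
          · exact (hB _ h1).2 t ht
      · intro c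
        obtain ⟨b, hb, β, hβ, hmono⟩ := hc' (fun n w => c (n + w))
        have hm : ∀ φ ∈ A, ∀ h ∈ Hs, ∀ w ∈ W,
            c (b + (φ ((∑ t ∈ β, x t) + h) - φ h - ψ (∑ t ∈ β, x t)) + w) = c (b + w) := by
          intro φ hφ h hh w hw
          exact congrFun (hmono φ hφ h hh) ⟨w, hw⟩
        rcases hc (fun n => c (b + n)) with ⟨a, ha, β1, hβ1, hh⟩ | ⟨a, ha, Γ, hΓ, hh⟩
        · left
          refine ⟨b + a, ?_, β1, by simp [hβ1], fun φ hφ => ?_⟩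
          · apply Finset.mem_union_left
            exact Finset.mem_image.2 ⟨(a, b), by simp [ha, hb], rfl⟩
          · rw [add_assoc]; exact hh φ hφ
        · by_cases hn : c (b + a) ∈ Γ
          · left
            obtain ⟨β1, hβ1, h1⟩ := hh _ hn
            refine ⟨b + a, ?_, β1, by simp [hβ1], fun φ hφ => ?_⟩
            · apply Finset.mem_union_left
              exact Finset.mem_image.2 ⟨(a, b), by simp [ha, hb], rfl⟩
            · rw [add_assoc]; exact h1 φ hφ
          · right
            refine ⟨b + a - ψ (∑ t ∈ β, x t), ?_, insert (c (b + a)) Γ, ?_, ?_⟩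
            · apply Finset.mem_union_right
              exact Finset.mem_image.2 ⟨(a, b, β), by simp [ha, hb, hβ], rfl⟩
            · rw [Finset.card_insert_of_notMem hn, hΓ]
            · intro γ hγ
              rcases Finset.mem_insert.1 hγ with rfl | hγ
              · refine ⟨β, by simp [hβ], fun φ hφ => ?_⟩
                have := hm φ hφ 0 (by simp [Hs]) a (by simp [W, ha])
                rw [← this, hA0 φ hφ, add_zero]
                congr 1; ring
              · obtain ⟨β1, hβ1, h1⟩ := hh γ hγ
                refine ⟨β ∪ β1, ?_, fun φ hφ => ?_⟩
                · apply Finset.mem_union_right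
                  exact Finset.mem_image.2 ⟨(β1, β), by simp [hβ1, hβ], rfl⟩
                · have hdisj : Disjoint β β1 := by
                    rw [Finset.disjoint_left]
                    intro t h1 h2
                    have := (hB' β hβ).2 t h1
                    have := hL' β1 hβ1 t h2
                    omega
                  rw [Finset.sum_union hdisj, ← h1 φ hφ]
                  have := hm φ hφ (∑ t ∈ β1, x t)
                    (Finset.mem_insert_of_mem (Finset.mem_image_of_mem _ hβ1))
                    (a + φ (∑ t ∈ β1, x t))
                    (Finset.mem_union_right _ (Finset.mem_image.2
                      ⟨(a, φ, β1), by simp [ha, hφ, hβ1], rfl⟩))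
                  rw [← this]
                  congr 1; ring
  obtain ⟨I, B, hB, hc⟩ := key (Nat.card κ + 1)
  refine ⟨I, B, hB, fun c => ?_⟩
  rcases hc c with h | ⟨a, _, Γ, hΓ, _⟩
  · exact h
  · exfalso
    have := Fintype.ofFinite κ
    have h1 := Finset.card_le_univ Γ
    rw [← Nat.card_eq_fintype_card] at h1
    omega

/-- PET induction: polynomial IP van der Waerden, finitary form. -/
lemma pet (x : ℕ → M) (w : Multiset ℕ) : ∀ (A : Finset (M → ℤ)) (C : Multiset ((M → ℤ) × ℕ)),
    C.map Prod.snd = w → (∀ q ∈ C, Rdeg (q.2 + 1) q.1) →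
    (∀ φ ∈ A, φ = 0 ∨ ∃ q ∈ C, Rdeg q.2 (φ - q.1)) →
    ∀ (κ : Type) [Finite κ] (L : ℕ),
    ∃ (I : Finset ℤ) (B : Finset (Finset ℕ)),
      (∀ β ∈ B, β.Nonempty ∧ ∀ t ∈ β, L ≤ t) ∧
      ∀ c : ℤ → κ, ∃ a ∈ I, ∃ β ∈ B, ∀ φ ∈ A, c (a + φ (∑ t ∈ β, x t)) = c a := by
  classical
  have wf : WellFounded (Relation.CutExpand (fun a b : ℕ => a < b)) :=
    WellFounded.cutExpand Nat.lt_wfRel.wf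
  induction w using wf.induction with
  | _ w ih =>
  intro A C hCw hC hA κ _ L
  by_cases hC0 : C = 0
  · subst hC0
    refine ⟨{0}, {{L}}, by simp, fun c => ⟨0, by simp, {L}, by simp, fun φ hφ => ?_⟩⟩
    rcases hA φ hφ with rfl | ⟨q, hq, _⟩
    · simp
    · simp at hq
  obtain ⟨q0, hq0, hmin⟩ : ∃ q0 ∈ C, ∀ q ∈ C, q0.2 ≤ q.2 := by
    obtain ⟨q1, hq1⟩ := Multiset.exists_mem_of_ne_zero hC0
    obtain ⟨q0, h0, h1⟩ := Finset.exists_min_image C.toFinset Prod.snd ⟨q1, by simpa using hq1⟩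
    exact ⟨q0, by simpa using h0, fun q hq => h1 q (by simpa using hq)⟩
  obtain ⟨C', rfl⟩ := Multiset.exists_cons_of_mem hq0
  by_cases hψ : ∃ ψ ∈ A, Rdeg q0.2 (ψ - q0.1)
  swap
  · refine ih (C'.map Prod.snd) ?_ A C' rfl (fun q hq => hC q (by simp [hq])) ?_ κ L
    · refine ⟨0, q0.2, by simp, ?_⟩
      rw [← hCw]; simp [add_comm, ← Multiset.singleton_add]
    · intro φ hφ
      rcases hA φ hφ with h | ⟨q, hq, h⟩
      · exact Or.inl h
      · rcases Multiset.mem_cons.1 hq with rfl | hq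
        · exact absurd ⟨φ, hφ, h⟩ hψ
        · exact Or.inr ⟨q, hq, h⟩
  obtain ⟨ψ, hψA, hψ⟩ := hψ
  have hψ1 : Rdeg (q0.2 + 1) ψ := by
    simpa using hψ.succ.add (hC q0 (by simp))
  -- drop the zero elements
  have hA00 : ∀ φ ∈ A, φ 0 = 0 := by
    intro φ hφ
    rcases hA φ hφ with rfl | ⟨q, hq, h⟩
    · rfl
    · have : Rdeg (q.2 + 1) φ := by simpa using h.succ.add (hC q hq)
      exact this.1
  have main := focus x (A.filter (· ≠ 0)) ψ ?_ (fun φ hφ => hA00 φ (Finset.mem_filter.1 hφ).1) κ L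
  · obtain ⟨I, B, hB, hc⟩ := main
    refine ⟨I, B, hB, fun c => ?_⟩
    obtain ⟨a, ha, β, hβ, h⟩ := hc c
    refine ⟨a, ha, β, hβ, fun φ hφ => ?_⟩
    by_cases h0 : φ = 0
    · simp [h0]
    · exact h φ (by simp [hφ, h0])
  intro Hs κ' _ L'
  let A' : Finset (M → ℤ) := ((A.filter (· ≠ 0)) ×ˢ Hs).image
    fun q => fun y => q.1 (y + q.2) - q.1 q.2 - ψ y
  let N : Finset (M → ℤ) := if q0.2 = 0 then ∅ else A'.filter (fun φ => Rdeg q0.2 φ)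
  let C2 : Multiset ((M → ℤ) × ℕ) :=
    C'.map (fun q => (q.1 - q0.1, q.2)) + N.val.map (fun φ => (φ, q0.2 - 1))
  have hN : ∀ φ ∈ N, q0.2 ≠ 0 ∧ Rdeg q0.2 φ := by
    intro φ hφ
    by_cases h0 : q0.2 = 0
    · simp [N, h0] at hφ
    · refine ⟨h0, ?_⟩
      simp only [N, if_neg h0, Finset.mem_filter] at hφ
      exact hφ.2
  have main := ih (C2.map Prod.snd) ?_ A' C2 rfl ?_ ?_ κ' L'
  · obtain ⟨I, B, hB, hc⟩ := main
    refine ⟨I, B, hB, fun c => ?_⟩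
    obtain ⟨a, ha, β, hβ, h⟩ := hc c
    refine ⟨a, ha, β, hβ, fun φ hφ h' hh' => ?_⟩
    exact h _ (Finset.mem_image.2 ⟨(φ, h'), Finset.mem_product.2 ⟨hφ, hh'⟩, rfl⟩)
  · refine ⟨N.val.map (fun _ => q0.2 - 1), q0.2, ?_, ?_⟩
    · intro a ha
      obtain ⟨φ, hφ, rfl⟩ := Multiset.mem_map.1 ha
      have := (hN φ hφ).1
      omega
    · rw [← hCw]
      simp only [C2, Multiset.map_add, Multiset.map_map,
        ← Multiset.singleton_add, Function.comp_def]
      abel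
  · intro q hq
    rcases Multiset.mem_add.1 hq with hq | hq
    · obtain ⟨q', hq', rfl⟩ := Multiset.mem_map.1 hq
      refine (hC q' (by simp [hq'])).sub ((hC q0 (by simp)).mono ?_)
      have := hmin q' (by simp [hq'])
      omega
    · obtain ⟨φ, hφ, rfl⟩ := Multiset.mem_map.1 hq
      have := hN φ hφ
      refine this.2.mono ?_
      show q0.2 ≤ q0.2 - 1 + 1
      omega
  · intro φ' hφ'
    have hmem := hφ'
    obtain ⟨⟨φ, h⟩, hq, rfl⟩ := Finset.mem_image.1 hφ'
    obtain ⟨hφ, hh⟩ := Finset.mem_product.1 hq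
    obtain ⟨hφ, hφ0⟩ := Finset.mem_filter.1 hφ
    rcases hA φ hφ with h0 | ⟨q, hq, hd⟩
    · exact absurd h0 hφ0
    have ht := Rdeg.translate h (hC q hq) hd
    rcases Multiset.mem_cons.1 hq with rfl | hq'
    · have hr : Rdeg q.2 (fun y => φ (y + h) - φ h - ψ y) := by
        convert ht.sub hψ using 1
        funext y; simp
      by_cases h0 : q.2 = 0
      · left
        rw [h0] at hr
        exact hr
      · right
        refine ⟨((fun y => φ (y + h) - φ h - ψ y), q.2 - 1), ?_, ?_⟩
        · apply Multiset.mem_add.2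
          right
          refine Multiset.mem_map.2 ⟨_, ?_, rfl⟩
          show _ ∈ N
          simp only [N, if_neg h0, Finset.mem_filter]
          exact ⟨hmem, hr⟩
        · convert Rdeg.zero (M := M) (q.2 - 1) using 1
          simp
    · right
      refine ⟨(q.1 - q0.1, q.2), ?_, ?_⟩
      · apply Multiset.mem_add.2
        left
        exact Multiset.mem_map.2 ⟨q, hq', rfl⟩
      · convert ht.sub (hψ.mono (hmin q (by simp [hq']))) using 1
        funext y; simp; ring

end

/-- Polynomial IP van der Waerden theorem for colourings of `ℕ`. -/
lemma vdw (κ : Type) [Finite κ] (c : ℕ → κ) (F Ps : Finset (ℕ → ℕ))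
    (hPs : ∀ Q ∈ Ps, IsPolyZeroConst Q) (L : ℕ) :
    ∃ (a : ℕ) (β : Finset ℕ), β.Nonempty ∧ (∀ t ∈ β, L ≤ t) ∧
      ∀ f ∈ F, ∀ Q ∈ Ps, c (a + Q (∑ t ∈ β, f t)) = c a := by
  classical
  let M := (ℕ → ℕ) → ℕ
  let x : ℕ → M := fun t f => f t
  have hx : ∀ (β : Finset ℕ) (f : ℕ → ℕ), (∑ t ∈ β, x t) f = ∑ t ∈ β, f t := by
    intro β f
    rw [Finset.sum_apply]
  let A : Finset (M → ℤ) := (F ×ˢ Ps).image fun q => fun y : M => ((q.2 (y q.1) : ℕ) : ℤ)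
  have hA : ∀ φ ∈ A, ∃ d, Rdeg d φ := by
    intro φ hφ
    obtain ⟨⟨f, Q⟩, hq, rfl⟩ := Finset.mem_image.1 hφ
    obtain ⟨hf, hQ⟩ := Finset.mem_product.1 hq
    obtain ⟨P, hP0, hP⟩ := hPs Q hQ
    obtain ⟨R, rfl⟩ := Polynomial.X_dvd_iff.2 hP0
    obtain ⟨d, hd⟩ := Rdeg.poly (M := M) (u := fun y => ((y f : ℕ) : ℤ)) rfl
      (fun y z => Nat.cast_add (y f) (z f))
      (R.map (Nat.castRingHom ℤ))
    refine ⟨d, ?_⟩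
    convert hd using 1
    funext y
    have hP' : Q (y f) = Polynomial.eval (y f) (Polynomial.X * R) := hP _
    have e : Polynomial.eval ((y f : ℕ) : ℤ) (R.map (Nat.castRingHom ℤ))
        = ((R.eval (y f) : ℕ) : ℤ) := by
      have := Polynomial.eval_map_apply (f := Nat.castRingHom ℤ) (p := R) (y f)
      simpa using this
    simp only [hP', e]
    simp
  choose! d hd using hA
  obtain ⟨I, B, hB, hc⟩ := pet x _ A (A.val.map fun φ => (φ, d φ)) rfl
    (by
      intro q hq
      obtain ⟨φ, hφ, rfl⟩ := Multiset.mem_map.1 hq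
      exact (hd φ hφ).succ)
    (by
      intro φ hφ
      refine Or.inr ⟨(φ, d φ), Multiset.mem_map.2 ⟨φ, hφ, rfl⟩, ?_⟩
      convert Rdeg.zero (M := M) (d φ) using 1
      simp)
    κ L
  obtain ⟨N, hN⟩ : ∃ N : ℕ, ∀ a ∈ I, 0 ≤ a + N := by
    refine ⟨I.sup Int.natAbs, fun a ha => ?_⟩
    have : a.natAbs ≤ I.sup Int.natAbs := Finset.le_sup ha
    omega
  obtain ⟨a, ha, β, hβ, h⟩ := hc (fun n => c (n + N).toNat)
  refine ⟨(a + N).toNat, β, (hB β hβ).1, (hB β hβ).2, fun f hf Q hQ => ?_⟩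
  have h1 := h _ (Finset.mem_image.2 ⟨(f, Q), by simp [hf, hQ], rfl⟩)
  rw [← h1]
  congr 1
  simp only [hx]
  have := hN a ha
  omega

/-- Polynomial J-sets. -/
def PJ (B : Set ℕ) : Prop :=
  ∀ (F Ps : Finset (ℕ → ℕ)) (L : ℕ), (∀ Q ∈ Ps, IsPolyZeroConst Q) →
    ∃ (a : ℕ) (β : Finset ℕ), β.Nonempty ∧ (∀ t ∈ β, L ≤ t) ∧
      ∀ f ∈ F, ∀ Q ∈ Ps, a + Q (∑ t ∈ β, f t) ∈ B

lemma exists_PJ_ultrafilter : ∃ p : Ultrafilter ℕ, ∀ B ∈ p, PJ B := by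
  classical
  have : (Filter.generate {C : Set ℕ | ¬ PJ Cᶜ}).NeBot := by
    rw [Filter.generate_neBot_iff]
    intro t ht hfin
    by_contra hne
    rw [Set.not_nonempty_iff_eq_empty] at hne
    have hcol : ∀ n : ℕ, ∃ C : t, n ∉ C.1 := by
      intro n
      have : n ∉ ⋂₀ t := by simp [hne]
      simp only [Set.mem_sInter, not_forall] at this
      obtain ⟨C, hC, h⟩ := this
      exact ⟨⟨C, hC⟩, h⟩
    choose c hc using hcol
    have hbad : ∀ C : t, ∃ (F Ps : Finset (ℕ → ℕ)) (L : ℕ), (∀ Q ∈ Ps, IsPolyZeroConst Q) ∧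
      ∀ (a : ℕ) (β : Finset ℕ), β.Nonempty → (∀ t ∈ β, L ≤ t) →
      ∃ f ∈ F, ∃ Q ∈ Ps, a + Q (∑ t ∈ β, f t) ∉ C.1ᶜ := by
      intro C
      have := ht C.2
      simp only [Set.mem_ofPred_eq, PJ] at this
      push Not at this
      exact this
    choose F Ps L hPs hbad using hbad
    have : Finite t := hfin
    have : Fintype t := Fintype.ofFinite _
    obtain ⟨a, β, h1, h2, h3⟩ := vdw t c (Finset.univ.biUnion F) (Finset.univ.biUnion Ps)
      (by
        intro Q hQ
        obtain ⟨C, _, hC⟩ := Finset.mem_biUnion.1 hQ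
        exact hPs C Q hC) (Finset.univ.sup L)
    obtain ⟨f, hf, Q, hQ, hfq⟩ := hbad (c a) a β h1
      (fun t ht => le_trans (Finset.le_sup (f := L) (Finset.mem_univ _)) (h2 t ht))
    have h4 := h3 f (Finset.mem_biUnion.2 ⟨_, Finset.mem_univ _, hf⟩) Q
      (Finset.mem_biUnion.2 ⟨_, Finset.mem_univ _, hQ⟩)
    have h5 := hc (a + Q (∑ t ∈ β, f t))
    rw [h4] at h5
    exact hfq h5
  refine ⟨Ultrafilter.of (Filter.generate {C : Set ℕ | ¬ PJ Cᶜ}), fun B hB => ?_⟩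
  by_contra hPJ
  have h1 : Bᶜ ∈ Filter.generate {C : Set ℕ | ¬ PJ Cᶜ} :=
    Filter.mem_generate_of_mem (by simpa using hPJ)
  have h2 := Ultrafilter.of_le (Filter.generate {C : Set ℕ | ¬ PJ Cᶜ}) h1
  exact Ultrafilter.compl_notMem_iff.2 hB h2

lemma mem_uAdd (p q : Ultrafilter ℕ) (A : Set ℕ) :
    A ∈ uAdd p q ↔ {x | {y | x + y ∈ A} ∈ q} ∈ p := Iff.rfl

lemma PJ_right {p q : Ultrafilter ℕ} (hp : ∀ B ∈ p, PJ B) : ∀ B ∈ uAdd p q, PJ B := by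
  intro B hB F Ps L hPs
  obtain ⟨a, β, h1, h2, h3⟩ := hp _ ((mem_uAdd p q B).1 hB) F Ps L hPs
  have h4 : (⋂ f ∈ F, ⋂ Q ∈ Ps, {y | a + Q (∑ t ∈ β, f t) + y ∈ B}) ∈ q := by
    refine (Filter.biInter_finset_mem F).2 fun f hf => ?_
    refine (Filter.biInter_finset_mem Ps).2 fun Q hQ => ?_
    exact h3 f hf Q hQ
  obtain ⟨y, hy⟩ := q.nonempty_of_mem h4
  simp only [Set.mem_iInter, Set.mem_ofPred_eq] at hy
  refine ⟨a + y, β, h1, h2, fun f hf Q hQ => ?_⟩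
  have := hy f hf Q hQ
  rwa [add_right_comm] at this

lemma PJ_left {p q : Ultrafilter ℕ} (hq : ∀ B ∈ q, PJ B) : ∀ B ∈ uAdd p q, PJ B := by
  intro B hB F Ps L hPs
  obtain ⟨x, hx⟩ := p.nonempty_of_mem ((mem_uAdd p q B).1 hB)
  obtain ⟨a, β, h1, h2, h3⟩ := hq _ hx F Ps L hPs
  refine ⟨x + a, β, h1, h2, fun f hf Q hQ => ?_⟩
  have := h3 f hf Q hQ
  rw [add_assoc]; exact this

section
attribute [local instance] Ultrafilter.add Ultrafilter.addSemigroup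

lemma uAdd_eq (p q : Ultrafilter ℕ) : uAdd p q = p + q := by
  apply Ultrafilter.ext
  intro s
  exact Iff.rfl

lemma PJ_of_minimal {p : Ultrafilter ℕ} (hp : IsMinimalIdempotent p) : ∀ B ∈ p, PJ B := by
  obtain ⟨hid, hmin⟩ := hp
  simp only [IdempotentUF, uAdd_eq] at hid hmin
  let J : Set (Ultrafilter ℕ) := {q | ∀ B ∈ q, PJ B}
  have hJr : ∀ q ∈ J, ∀ r, q + r ∈ J := fun q hq r => by
    have := PJ_right (q := r) hq
    rwa [uAdd_eq] at this
  have hJl : ∀ q ∈ J, ∀ r, r + q ∈ J := fun q hq r => by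
    have := PJ_left (p := r) hq
    rwa [uAdd_eq] at this
  have hJc : IsClosed J := by
    have : J = ⋂ B ∈ {B : Set ℕ | ¬ PJ B}, {q : Ultrafilter ℕ | B ∈ q}ᶜ := by
      ext q
      simp only [J, Set.mem_ofPred_eq, Set.mem_iInter, Set.mem_compl_iff]
      exact ⟨fun h B h1 h2 => h1 (h B h2), fun h B h2 => by_contra fun h1 => h B h1 h2⟩
    rw [this]
    refine isClosed_biInter fun B _ => ?_
    rw [isClosed_compl_iff]
    exact ultrafilter_isOpen_basic B
  obtain ⟨q0, hq0⟩ := exists_PJ_ultrafilter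
  obtain ⟨e, ⟨q, hq, rfl⟩, he⟩ := exists_idempotent_in_compact_add_subsemigroup
    (M := Ultrafilter ℕ) Ultrafilter.continuous_add_left ((· + p) '' J) ⟨_, q0, hq0, rfl⟩
    (hJc.isCompact.image (Ultrafilter.continuous_add_left p))
    (by
      rintro _ ⟨a, ha, rfl⟩ _ ⟨b, hb, rfl⟩
      refine ⟨a + p + b, hJl b hb _, ?_⟩
      simp only [add_assoc])
  simp only at he
  set e := q + p with hedef
  have hep : e + p = e := by rw [hedef, add_assoc, hid]
  have hmem : p + e ∈ J := hJl _ (hJr q hq p) p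
  have := hmin (p + e)
    (by rw [add_assoc, ← add_assoc e p e, hep, he])
    (by rw [add_assoc, hep]) (by rw [← add_assoc, hid])
  rw [this] at hmem
  exact hmem

end

/-- The star set. -/
def star (p : Ultrafilter ℕ) (B : Set ℕ) : Set ℕ := {x | x ∈ B ∧ {y | x + y ∈ B} ∈ p}

lemma star_mem {p : Ultrafilter ℕ} (hp : IdempotentUF p) {B : Set ℕ} (hB : B ∈ p) :
    star p B ∈ p := by
  have h : B ∈ uAdd p p := by rw [hp]; exact hB
  exact Filter.inter_mem hB ((mem_uAdd p p B).1 h)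

lemma star_shift {p : Ultrafilter ℕ} (hp : IdempotentUF p) {B : Set ℕ} {x : ℕ}
    (hx : x ∈ star p B) : {y | x + y ∈ star p B} ∈ p := by
  have := star_mem hp hx.2
  refine Filter.mem_of_superset this ?_
  rintro y ⟨h1, h2⟩
  refine ⟨h1, ?_⟩
  simpa [add_assoc] using h2

lemma poly_shift {P : ℕ → ℕ} (hP : IsPolyZeroConst P) (x : ℕ) :
    ∃ Q, IsPolyZeroConst Q ∧ ∀ y, P (x + y) = P x + Q y := by
  obtain ⟨P', h0, h⟩ := hP
  let R : Polynomial ℕ := P'.comp (Polynomial.X + Polynomial.C x)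
  refine ⟨fun y => (R.divX * Polynomial.X).eval y, ⟨_, by simp, fun _ => rfl⟩, fun y => ?_⟩
  have h1 : R.eval y = P'.eval (x + y) := by simp [R, Polynomial.eval_comp, add_comm]
  have h2 : R.coeff 0 = P'.eval x := by
    rw [Polynomial.coeff_zero_eq_eval_zero]; simp [R, Polynomial.eval_comp]
  have h3 := congrArg (Polynomial.eval y) (Polynomial.divX_mul_X_add R)
  rw [Polynomial.eval_add, Polynomial.eval_C, h1, h2] at h3
  rw [h, h, ← h3, add_comm]

lemma wf_rec_exists {X δ : Type} {r : X → X → Prop} (wf : WellFounded r)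
    (Rel : (x : X) → ((y : X) → r y x → δ) → δ → Prop)
    (h : ∀ x g, ∃ d, Rel x g d) : ∃ D : X → δ, ∀ x, Rel x (fun y _ => D y) (D x) := by
  choose s hs using h
  refine ⟨wf.fix s, fun x => ?_⟩
  rw [wf.fix_eq]
  exact hs x _

/-- A realized triple: lower bound, sum of `α`, sum of the `f`. -/
abbrev Triple := Finset (ℕ → ℕ) × ℕ × ℕ

lemma one_dim {p : Ultrafilter ℕ} (hp : IsMinimalIdempotent p) (T : Finset (ℕ → ℕ))
    (hTP : ∀ P ∈ T, IsPolyZeroConst P) (B : Finset (ℕ → ℕ) → Set ℕ) (hB : ∀ K, B K ∈ p) :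
    ∃ (α : Finset (ℕ → ℕ) → ℕ) (H : Finset (ℕ → ℕ) → Finset ℕ)
      (R : Finset (ℕ → ℕ) → Finset Triple),
      (∀ F, (H F).Nonempty) ∧
      (∀ F' F, F' ⊂ F → ∀ x ∈ H F', ∀ y ∈ H F, x < y) ∧
      (∀ F, ∀ q ∈ R F, ∀ P ∈ T, q.2.1 + P q.2.2 ∈ B q.1) ∧
      (∀ F, ∀ K ⊆ F, ∀ f ∈ F, (K, α F, ∑ t ∈ H F, f t) ∈ R F) ∧
      (∀ F' F, F' ⊂ F → ∀ q ∈ R F', ∀ f ∈ F,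
        (q.1, q.2.1 + α F, q.2.2 + ∑ t ∈ H F, f t) ∈ R F) := by
  classical
  have hid := hp.1
  let δ := {d : ℕ × Finset ℕ × Finset Triple //
    ∀ q ∈ d.2.2, ∀ P ∈ T, q.2.1 + P q.2.2 ∈ star p (B q.1)}
  have main := wf_rec_exists (X := Finset (ℕ → ℕ)) (δ := δ)
    (r := fun F' F => F' ⊂ F) (IsWellFounded.wf)
    (fun F g d => d.1.2.1.Nonempty ∧
      (∀ F' (h : F' ⊂ F), ∀ x ∈ (g F' h).1.2.1, ∀ y ∈ d.1.2.1, x < y) ∧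
      (∀ K ⊆ F, ∀ f ∈ F, (K, d.1.1, ∑ t ∈ d.1.2.1, f t) ∈ d.1.2.2) ∧
      (∀ F' (h : F' ⊂ F), ∀ q ∈ (g F' h).1.2.2, ∀ f ∈ F,
        (q.1, q.2.1 + d.1.1, q.2.2 + ∑ t ∈ d.1.2.1, f t) ∈ d.1.2.2)) ?_
  · obtain ⟨D, hD⟩ := main
    refine ⟨fun F => (D F).1.1, fun F => (D F).1.2.1, fun F => (D F).1.2.2,
      fun F => (hD F).1, fun F' F h => (hD F).2.1 F' h, fun F q hq P hP => ?_,
      fun F => (hD F).2.2.1, fun F' F h => (hD F).2.2.2 F' h⟩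
    exact ((D F).2 q hq P hP).1
  intro F g
  let Old : Finset Triple := F.ssubsets.attach.biUnion
    fun F' => (g F'.1 (Finset.mem_ssubsets.1 F'.2)).1.2.2
  have hOldmem : ∀ F' (h : F' ⊂ F), ∀ q ∈ (g F' h).1.2.2, q ∈ Old := by
    intro F' h q hq
    exact Finset.mem_biUnion.2 ⟨⟨F', Finset.mem_ssubsets.2 h⟩, Finset.mem_attach _ _, hq⟩
  have hOld : ∀ q ∈ Old, ∀ P ∈ T, q.2.1 + P q.2.2 ∈ star p (B q.1) := by
    intro q hq P hP
    obtain ⟨F', _, hq'⟩ := Finset.mem_biUnion.1 hq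
    exact (g F'.1 (Finset.mem_ssubsets.1 F'.2)).2 q hq' P hP
  let HOld : Finset ℕ := F.ssubsets.attach.biUnion
    fun F' => (g F'.1 (Finset.mem_ssubsets.1 F'.2)).1.2.1
  have hHOld : ∀ F' (h : F' ⊂ F), ∀ x ∈ (g F' h).1.2.1, x ∈ HOld := by
    intro F' h q hq
    exact Finset.mem_biUnion.2 ⟨⟨F', Finset.mem_ssubsets.2 h⟩, Finset.mem_attach _ _, hq⟩
  have hsh : ∀ (P : ℕ → ℕ) (x : ℕ), ∃ Q, P ∈ T →
      (IsPolyZeroConst Q ∧ ∀ y, P (x + y) = P x + Q y) := by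
    intro P x
    by_cases hP : P ∈ T
    · obtain ⟨Q, hQ⟩ := poly_shift (hTP P hP) x
      exact ⟨Q, fun _ => hQ⟩
    · exact ⟨P, fun h => absurd h hP⟩
  choose sh hsh using hsh
  let Ps : Finset (ℕ → ℕ) := T ∪ (T ×ˢ Old).image fun q => sh q.1 q.2.2.2
  have hPs : ∀ Q ∈ Ps, IsPolyZeroConst Q := by
    intro Q hQ
    rcases Finset.mem_union.1 hQ with h | h
    · exact hTP Q h
    · obtain ⟨⟨P, q⟩, hq, rfl⟩ := Finset.mem_image.1 h
      exact (hsh P _ (Finset.mem_product.1 hq).1).1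
  have hS : ((⋂ K ∈ F.powerset, star p (B K)) ∩
      ⋂ q ∈ Old, ⋂ P ∈ T, {y | q.2.1 + P q.2.2 + y ∈ star p (B q.1)}) ∈ p := by
    refine Filter.inter_mem ?_ ?_
    · exact (Filter.biInter_finset_mem _).2 fun K _ => star_mem hid (hB K)
    · refine (Filter.biInter_finset_mem _).2 fun q hq => ?_
      refine (Filter.biInter_finset_mem _).2 fun P hP => ?_
      exact star_shift hid (hOld q hq P hP)
  obtain ⟨a, β, h1, h2, h3⟩ := PJ_of_minimal hp _ hS F Ps (HOld.sup id + 1) hPs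
  let R : Finset Triple := ((F.powerset ×ˢ F).image fun q => (q.1, a, ∑ t ∈ β, q.2 t)) ∪
    ((Old ×ˢ F).image fun q => (q.1.1, q.1.2.1 + a, q.1.2.2 + ∑ t ∈ β, q.2 t))
  refine ⟨⟨(a, β, R), ?_⟩, h1, ?_, ?_, ?_⟩
  · intro q hq P hP
    rcases Finset.mem_union.1 hq with hq | hq
    · obtain ⟨⟨K, f⟩, hKf, rfl⟩ := Finset.mem_image.1 hq
      obtain ⟨hK, hf⟩ := Finset.mem_product.1 hKf
      have := (h3 f hf P (Finset.mem_union_left _ hP)).1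
      exact Set.mem_iInter₂.1 this K hK
    · obtain ⟨⟨q, f⟩, hqf, rfl⟩ := Finset.mem_image.1 hq
      obtain ⟨hq, hf⟩ := Finset.mem_product.1 hqf
      have := (h3 f hf (sh P q.2.2) (Finset.mem_union_right _
        (Finset.mem_image.2 ⟨(P, q), Finset.mem_product.2 ⟨hP, hq⟩, rfl⟩))).2
      have h5 := Set.mem_iInter₂.1 (Set.mem_iInter₂.1 this q hq) P hP
      have h6 := (hsh P q.2.2 hP).2 (∑ t ∈ β, f t)
      show q.2.1 + a + P (q.2.2 + ∑ t ∈ β, f t) ∈ star p (B q.1)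
      rw [h6]
      have h7 : q.2.1 + P q.2.2 + (a + sh P q.2.2 (∑ t ∈ β, f t)) ∈ star p (B q.1) := h5
      convert h7 using 1
      ring
  · intro F' h x hx y hy
    have h4 : x ≤ HOld.sup id := Finset.le_sup (f := id) (hHOld F' h x hx)
    have h5 := h2 y hy
    omega
  · intro K hK f hf
    exact Finset.mem_union_left _ (Finset.mem_image.2
      ⟨(K, f), Finset.mem_product.2 ⟨Finset.mem_powerset.2 hK, hf⟩, rfl⟩)
  · intro F' h q hq f hf
    exact Finset.mem_union_right _ (Finset.mem_image.2
      ⟨(q, f), Finset.mem_product.2 ⟨hOldmem F' h q hq, hf⟩, rfl⟩)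

lemma chain_mem {α : Finset (ℕ → ℕ) → ℕ} {H : Finset (ℕ → ℕ) → Finset ℕ}
    {R : Finset (ℕ → ℕ) → Finset Triple}
    (h1 : ∀ F, ∀ K ⊆ F, ∀ f ∈ F, (K, α F, ∑ t ∈ H F, f t) ∈ R F)
    (h2 : ∀ F' F, F' ⊂ F → ∀ q ∈ R F', ∀ f ∈ F,
        (q.1, q.2.1 + α F, q.2.2 + ∑ t ∈ H F, f t) ∈ R F)
    {G : ℕ → Finset (ℕ → ℕ)} (hG : ∀ i j, i < j → G i ⊂ G j)
    {f : ℕ → ℕ → ℕ} (hf : ∀ i, f i ∈ G i) (K : Finset (ℕ → ℕ)) (β : Finset ℕ) :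
    β.Nonempty → (∀ i ∈ β, K ⊆ G i) →
    ∃ i ∈ β, (K, ∑ i ∈ β, α (G i), ∑ i ∈ β, ∑ t ∈ H (G i), f i t) ∈ R (G i) := by
  induction β using Finset.induction_on_max with
  | empty => simp
  | insert a s hs ih =>
    intro _ hK
    have ha : a ∉ s := fun h => lt_irrefl _ (hs a h)
    refine ⟨a, by simp, ?_⟩
    rcases s.eq_empty_or_nonempty with rfl | hne
    · simpa using h1 (G a) K (hK a (by simp)) (f a) (hf a)
    · obtain ⟨i, hi, hmem⟩ := ih hne (fun i hi => hK i (by simp [hi]))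
      have := h2 _ _ (hG i a (hs i hi)) _ hmem (f a) (hf a)
      rw [Finset.sum_insert ha, Finset.sum_insert ha, add_comm (α (G a)),
        add_comm (∑ t ∈ H (G a), f a t)]
      exact this

lemma multi_dim (T : Finset (ℕ → ℕ)) (hTP : ∀ P ∈ T, IsPolyZeroConst P) (m : ℕ) :
    ∀ (p : Fin m → Ultrafilter ℕ) (_ : ∀ i, IsMinimalIdempotent (p i))
    (A : Finset (ℕ → ℕ) → Set (Fin m → ℕ)) (_ : ∀ K, A K ∈ tensor m p),
    ∃ (α : Fin m → Finset (ℕ → ℕ) → ℕ) (H : Fin m → Finset (ℕ → ℕ) → Finset ℕ),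
      (∀ (j : Fin m) (F : Finset (ℕ → ℕ)), (H j F).Nonempty) ∧
      (∀ (j : Fin m) (F G : Finset (ℕ → ℕ)), F ⊂ G →
        ∀ x ∈ H j F, ∀ y ∈ H j G, x < y) ∧
      (∀ G : ℕ → Finset (ℕ → ℕ), (∀ i j, i < j → G i ⊂ G j) →
        ∀ f : ℕ → ℕ → ℕ, (∀ i, f i ∈ G i) →
        ∀ β : Fin m → Finset ℕ,
          (∀ l, (β l).Nonempty) →
          (∀ l l' : Fin m, l < l' → ∀ x ∈ β l, ∀ y ∈ β l', x < y) →
          ∀ P : Fin m → ℕ → ℕ, (∀ l, P l ∈ T) →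
          ∀ K, (∀ l, ∀ i ∈ β l, K ⊆ G i) →
          (fun l => (∑ i ∈ β l, α l (G i)) +
              P l (∑ i ∈ β l, ∑ t ∈ H l (G i), f i t)) ∈ A K) := by
  induction m with
  | zero =>
    intro p _ A hA
    refine ⟨fun j => j.elim0, fun j => j.elim0, fun j => j.elim0, fun j => j.elim0, ?_⟩
    intro G _ f _ β _ _ P _ K _
    have h : (fun i : Fin 0 => (i.elim0 : ℕ)) ∈ A K := hA K
    convert h using 1
  | succ m ih =>
    intro p hp A hA
    have hA' : ∀ K, {x | {v | (Fin.cons x v : Fin (m + 1) → ℕ) ∈ A K} ∈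
        tensor m fun i => p i.succ} ∈ p 0 := fun K => hA K
    obtain ⟨α, H, R, hH, hlt, hR, h1, h2⟩ := one_dim (hp 0) T hTP _ hA'
    obtain ⟨α', H', hH', hlt', hmain⟩ := ih (fun i => p i.succ) (fun i => hp _)
      (fun F => ⋂ q ∈ R F, ⋂ P ∈ T,
        {v | (Fin.cons (q.2.1 + P q.2.2) v : Fin (m + 1) → ℕ) ∈ A q.1})
      (by
        intro F
        refine (Filter.biInter_finset_mem _).2 fun q hq => ?_
        refine (Filter.biInter_finset_mem _).2 fun P hP => ?_
        exact hR F q hq P hP)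
    refine ⟨Fin.cons α α', Fin.cons H H', ?_, ?_, ?_⟩
    · intro j F
      refine Fin.cases ?_ (fun j => ?_) j
      · exact hH F
      · exact hH' j F
    · intro j F G hFG
      refine Fin.cases ?_ (fun j => ?_) j
      · exact hlt F G hFG
      · exact hlt' j F G hFG
    · intro G hG f hf β hβ hβlt P hP K hK
      obtain ⟨i, hi, hmem⟩ := chain_mem h1 h2 hG hf K (β 0) (hβ 0) (hK 0)
      have := hmain G hG f hf (fun l => β l.succ) (fun l => hβ _)
        (fun l l' hl => hβlt _ _ (Fin.succ_lt_succ_iff.2 hl)) (fun l => P l.succ) (fun l => hP _)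
        (G i) (fun l k hk => (hG i k (hβlt 0 l.succ (Fin.succ_pos l) i hi k hk)).subset)
      have h3 := Set.mem_iInter₂.1 (Set.mem_iInter₂.1 this _ hmem) (P 0) (hP 0)
      have h4 : (Fin.cons _ _ : Fin (m + 1) → ℕ) ∈ A K := h3
      convert h4 using 1
      funext l
      refine Fin.cases ?_ (fun l => ?_) l
      · simp
      · simp

/-- Multidimensional Stronger Polynomial Central Sets Theorem II (infinitary form). -/
theorem multidimensional_stronger_polynomial_CST_II_infinitary (m : ℕ) (hm : 1 ≤ m)
    (p : Fin m → Ultrafilter ℕ) (hp : ∀ i, IsMinimalIdempotent (p i))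
    (A : Set (Fin m → ℕ)) (hA : A ∈ tensor m p)
    (T : Finset (ℕ → ℕ)) (hT : T.Nonempty) (hTP : ∀ P ∈ T, IsPolyZeroConst P) :
    ∃ (α : Fin m → Finset (ℕ → ℕ) → ℕ) (H : Fin m → Finset (ℕ → ℕ) → Finset ℕ),
      (∀ (j : Fin m) (F : Finset (ℕ → ℕ)), F.Nonempty → (H j F).Nonempty) ∧
      (∀ (j : Fin m) (F G : Finset (ℕ → ℕ)), F.Nonempty → F ⊂ G →
        ∀ x ∈ H j F, ∀ y ∈ H j G, x < y) ∧
      (∀ G : ℕ → Finset (ℕ → ℕ),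
        (∀ i, (G i).Nonempty) → (∀ i j, i < j → G i ⊂ G j) →
        ∀ f : ℕ → ℕ → ℕ, (∀ i, f i ∈ G i) →
        ∀ β : Fin m → Finset ℕ,
          (∀ l, (β l).Nonempty) →
          (∀ l l' : Fin m, l < l' → ∀ x ∈ β l, ∀ y ∈ β l', x < y) →
          ∀ P : Fin m → ℕ → ℕ, (∀ l, P l ∈ T) →
          (fun l => (∑ i ∈ β l, α l (G i)) +
              P l (∑ i ∈ β l, ∑ t ∈ H l (G i), f i t)) ∈ A) := by
  obtain ⟨α, H, h1, h2, h3⟩ := multi_dim T hTP m p hp (fun _ => A) (fun _ => hA)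
  refine ⟨α, H, fun j F _ => h1 j F, fun j F G _ h => h2 j F G h, ?_⟩
  intro G _ hG f hf β hβ hβlt P hP
  exact h3 G hG f hf β hβ hβlt P hP ∅ (fun _ _ _ => Finset.empty_subset _)

end MultiCST
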